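/- In the setting where G ∈ 𝒪(k) (k ≥ 3 odd) has unique cycle vertices u=u_0,u_1,…,u_{k−1} with deg(u)=4 and deg(u_i)=2 for i ≥ 1, for every t ≥ 1 with k+2t ≤ n: if 2^{k+2t} · ρ_{n−k−2t} is an integer, then 2^{2t} · K_{2t} is an integer. -/

import Mathlib

open Matrix

attribute [local instance] Classical.propDecidable

namespace GroverPaper

variable {V : Type*}

/-- The arc set of a simple graph: ordered pairs of adjacent vertices. -/
abbrev Arc (G : SimpleGraph V) : Type _ := {p : V × V // G.Adj p.1 p.2}

/-- The time evolution matrix of the Grover walk on a graph `G`. -/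
noncomputable def groverU [Fintype V] (G : SimpleGraph V) :
    Matrix (Arc G) (Arc G) ℂ := fun e f =>
  if f.val.2 = e.val.1 then
    if e.val = (f.val.2, f.val.1) then 2 / (G.degree f.val.2 : ℂ) - 1
    else 2 / (G.degree f.val.2 : ℂ)
  else 0

/-- A graph is periodic if some positive power of its Grover evolution is the identity. -/
def IsPeriodic [Fintype V] (G : SimpleGraph V) : Prop :=
  ∃ k : ℕ, 0 < k ∧ groverU G ^ k = 1

/-- The period of a periodic graph: the least positive `k` with `U^k = 1`. -/
noncomputable def period [Fintype V] (G : SimpleGraph V) : ℕ :=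
  sInf {k : ℕ | 0 < k ∧ groverU G ^ k = 1}

/-- A graph is `k`-periodic if it is periodic with period `k`. -/
def IsKPeriodic [Fintype V] (G : SimpleGraph V) (k : ℕ) : Prop :=
  IsPeriodic G ∧ period G = k

/-- A graph is odd-periodic if it is periodic with odd period. -/
def IsOddPeriodic [Fintype V] (G : SimpleGraph V) : Prop :=
  IsPeriodic G ∧ Odd (period G)

/-- The transition matrix of the isotropic random walk on `G`. -/
noncomputable def transition [Fintype V] (G : SimpleGraph V) :
    Matrix V V ℝ := fun u v =>
  if G.Adj u v then 1 / (G.degree u : ℝ) else 0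

/-- `M(e) = 1/(deg x · deg y)` for an edge `e = xy`. -/
noncomputable def edgeM [Fintype V] (G : SimpleGraph V) : Sym2 V → ℝ :=
  Sym2.lift ⟨fun x y => 1 / ((G.degree x : ℝ) * (G.degree y : ℝ)), fun x y => by simp [mul_comm]⟩

/-- The sum, over all `i`-matchings contained in the edge collection `A`, of the product of
the `M`-values of the matching. (For `i = 0` this is `1`; if there is no such matching it
is `0`.) -/
noncomputable def matchSum [Fintype V] (G : SimpleGraph V) (A : Finset (Sym2 V)) (i : ℕ) : ℝ :=
  ∑ S ∈ A.powerset.filter (fun S => S.card = i ∧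
      ∀ e ∈ S, ∀ f ∈ S, e ≠ f → ∀ x : V, ¬(x ∈ e ∧ x ∈ f)),
    ∏ e ∈ S, edgeM G e

/-- The edges of `G` that neither lie on the cycle `c 0 ∼ c 1 ∼ … ∼ c (k-1) ∼ c 0` nor are
incident to `u = c 0`; this is the edge set `E_T` of the paper. -/
noncomputable def treeEdges [Fintype V] {k : ℕ} (G : SimpleGraph V) (c : ZMod k → V) :
    Finset (Sym2 V) :=
  G.edgeFinset.filter fun e => (∀ i : ZMod k, e ≠ s(c i, c (i + 1))) ∧ c 0 ∉ e

/-- `K_{2i}` of the paper: the sum over all `i`-matchings in `E_T` of the products of the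
`M`-values. -/
noncomputable def Km [Fintype V] {k : ℕ} (G : SimpleGraph V) (c : ZMod k → V) (i : ℕ) : ℝ :=
  matchSum G (treeEdges G c) i

/-- `K^g_{2i}(2,…,r)` of the paper, where `v` is the path `u = v 0, v 1, v 2, …` so that
`g_j = v_{j-1} v_j`: the sum over all `i`-matchings in `E_T ∖ {g_2,…,g_r}`. -/
noncomputable def Kg [Fintype V] {k : ℕ} (G : SimpleGraph V) (c : ZMod k → V)
    (v : ℕ → V) (i r : ℕ) : ℝ :=
  matchSum G (treeEdges G c \ (Finset.Icc 2 r).image fun j => s(v (j - 1), v j)) i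

/-- `L_{2i}(2,…,r) = K^g_{2i}(2,…,r) + K^h_{2i}(2,…,r)` of the paper. -/
noncomputable def Lm [Fintype V] {k : ℕ} (G : SimpleGraph V) (c : ZMod k → V)
    (v w : ℕ → V) (i r : ℕ) : ℝ :=
  Kg G c v i r + Kg G c w i r

/-- The coefficients of the characteristic polynomial of a matrix with zero diagonal, as sums over
the permutations moving a given number of indices. -/
theorem charpoly_coeff_of_diag_eq_zero {ι R : Type*} [Fintype ι] [CommRing R]
    (A : Matrix ι ι R) (hA : ∀ i, A i i = 0) {m : ℕ} (hm : m ≤ Fintype.card ι) :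
    A.charpoly.coeff (Fintype.card ι - m) =
      ∑ σ : Equiv.Perm ι with σ.support.card = m,
        ((Equiv.Perm.sign σ : ℤ) : R) * ∏ i ∈ σ.support, -A i (σ i) := by
  rw [Matrix.charpoly, ← Matrix.det_transpose, Matrix.det_apply', Polynomial.finsetSum_coeff,
    Finset.sum_filter]
  refine Finset.sum_congr rfl fun σ _ => ?_
  have hprod : ∏ i, (charmatrix A)ᵀ (σ i) i =
      Polynomial.C (∏ i ∈ σ.support, -A i (σ i)) *
        Polynomial.X ^ (Fintype.card ι - σ.support.card) := by
    rw [← Finset.prod_mul_prod_compl σ.support, ← Finset.card_compl, ← Finset.prod_const,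
      map_prod]
    congr 1
    · refine Finset.prod_congr rfl fun i hi => ?_
      rw [Matrix.transpose_apply, charmatrix_apply_ne _ _ _ (Equiv.Perm.mem_support.1 hi).symm,
        map_neg]
    · refine Finset.prod_congr rfl fun i hi => ?_
      have hi' : σ i = i := by simpa using hi
      rw [Matrix.transpose_apply, hi', charmatrix_apply_eq, hA]
      simp
  have hsign : ((Equiv.Perm.sign σ : ℤ) : Polynomial R) =
      Polynomial.C ((Equiv.Perm.sign σ : ℤ) : R) := by simp
  rw [hprod, hsign, Polynomial.coeff_C_mul, Polynomial.coeff_C_mul_X_pow]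
  have hle : σ.support.card ≤ Fintype.card ι := Finset.card_le_univ _
  have hiff : Fintype.card ι - m = Fintype.card ι - σ.support.card ↔ σ.support.card = m := by
    omega
  simp only [hiff, mul_ite, mul_zero]

/-- The coefficients of the characteristic polynomial of the transition matrix, as sums over the
permutations moving vertices along edges. -/
theorem charpoly_transition_coeff [Fintype V] (G : SimpleGraph V) {m : ℕ}
    (hm : m ≤ Fintype.card V) :
    (transition G).charpoly.coeff (Fintype.card V - m) =
      (-1) ^ m * ∑ σ : Equiv.Perm V with σ.support.card = m ∧ ∀ i, σ i ≠ i → G.Adj i (σ i),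
        ((Equiv.Perm.sign σ : ℤ) : ℝ) * ∏ i ∈ σ.support, (G.degree i : ℝ)⁻¹ := by
  rw [charpoly_coeff_of_diag_eq_zero _ (by simp [transition]) hm, ← Finset.filter_filter,
    Finset.sum_filter (fun σ : Equiv.Perm V => ∀ i, σ i ≠ i → G.Adj i (σ i)), Finset.mul_sum]
  refine Finset.sum_congr rfl fun σ hσ => ?_
  have hσm : σ.support.card = m := by simpa using hσ
  split_ifs with h
  · rw [Finset.prod_neg, hσm, mul_left_comm]
    congr 2
    refine Finset.prod_congr rfl fun i hi => ?_
    rw [transition, if_pos (h i (Equiv.Perm.mem_support.1 hi)), one_div]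
  · push Not at h
    obtain ⟨i, hi, hadj⟩ := h
    rw [Finset.prod_eq_zero (Equiv.Perm.mem_support.2 hi) (by simp [transition, hadj])]
    simp

/-- A permutation moving vertices along edges that traverses a bridge must return along it. -/
theorem apply_apply_eq_of_isBridge [Finite V] {G : SimpleGraph V} {σ : Equiv.Perm V}
    (hσ : ∀ i, σ i ≠ i → G.Adj i (σ i)) {x : V} (hb : G.IsBridge s(x, σ x)) :
    σ (σ x) = x := by
  by_contra hne
  rw [SimpleGraph.isBridge_iff] at hb
  let H := G.deleteEdges {s(x, σ x)}
  have hmaps : Set.MapsTo σ {i | ¬ H.Reachable x i} {i | ¬ H.Reachable x i} := by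
    intro i hi hr
    refine hi (hr.trans ?_)
    by_cases hfix : σ i = i
    · rw [hfix]
    refine (SimpleGraph.Adj.reachable ?_).symm
    refine SimpleGraph.deleteEdges_adj.2 ⟨hσ i hfix, fun he => ?_⟩
    rcases Sym2.eq_iff.1 (Set.mem_singleton_iff.1 he) with ⟨rfl, -⟩ | ⟨rfl, h⟩
    · exact hi (SimpleGraph.Reachable.refl _)
    · exact hne h
  obtain ⟨z, hz, hzx⟩ := (((Set.toFinite _).injOn_iff_bijOn_of_mapsTo hmaps).1
    σ.injective.injOn).surjOn (show σ x ∈ {i | ¬ H.Reachable x i} from hb)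
  rw [σ.injective hzx] at hz
  exact hz (SimpleGraph.Reachable.refl _)

/-- Distinct naturals below `k` remain distinct in `ZMod k`. -/
theorem zmod_natCast_ne {k a b : ℕ} (ha : a < k) (hb : b < k) (hab : a ≠ b) :
    (a : ZMod k) ≠ b := by
  rwa [Ne, ZMod.natCast_eq_natCast_iff', Nat.mod_eq_of_lt ha, Nat.mod_eq_of_lt hb]

/-- In `ZMod k` with `3 ≤ k`, two is nonzero. -/
theorem two_ne_zero_zmod {k : ℕ} (hk3 : 3 ≤ k) : (1 + 1 : ZMod k) ≠ 0 := by
  have := zmod_natCast_ne (k := k) (a := 2) (b := 0) (by omega) (by omega) (by omega)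
  rw [one_add_one_eq_two]
  exact_mod_cast this

/-- In a connected graph with as many edges as vertices, an edge off a given cycle is a bridge. -/
theorem isBridge_of_unicyclic [Fintype V] {G : SimpleGraph V} (hconn : G.Connected) {k : ℕ}
    (hk3 : 3 ≤ k) {c : ZMod k → V} (hcinj : Function.Injective c)
    (hcadj : ∀ i, G.Adj (c i) (c (i + 1))) (hcard : Fintype.card V = G.edgeFinset.card)
    {x y : V} (hxy : G.Adj x y) (hc : ∀ i, s(x, y) ≠ s(c i, c (i + 1))) :
    G.IsBridge s(x, y) := by
  by_contra hb
  let H := G.deleteEdges {s(x, y)}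
  have hH : H.Connected := hconn.connected_delete_edge_of_not_isBridge hb
  have hHb : ¬ H.IsBridge s(c 0, c (0 + 1)) := by
    rw [SimpleGraph.isBridge_iff, not_not]
    have key : ∀ j : ℕ, j + 1 ≤ k →
        (H.deleteEdges {s(c 0, c (0 + 1))}).Reachable (c 1) (c ((j : ZMod k) + 1)) := by
      intro j
      induction j with
      | zero => simp
      | succ j ih =>
        intro hj
        refine (ih (by omega)).trans (SimpleGraph.Adj.reachable ?_)
        have hadj : H.Adj (c ((j : ZMod k) + 1)) (c (((j + 1 : ℕ) : ZMod k) + 1)) := by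
          rw [Nat.cast_succ]
          exact SimpleGraph.deleteEdges_adj.2 ⟨hcadj _, fun he => hc _ he.symm⟩
        refine SimpleGraph.deleteEdges_adj.2 ⟨hadj, fun he => ?_⟩
        have h0 : (((j + 1 : ℕ) : ZMod k)) ≠ ((0 : ℕ) : ZMod k) :=
          zmod_natCast_ne (by omega) (by omega) (by omega)
        have h1 : (1 + 1 : ZMod k) ≠ 0 := two_ne_zero_zmod hk3
        rcases Sym2.eq_iff.1 (Set.mem_singleton_iff.1 he) with ⟨ha, -⟩ | ⟨ha, hb⟩
        · exact h0 (by simpa using hcinj ha)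
        · have := hcinj hb
          have h2 := hcinj ha
          rw [add_left_inj] at h2
          rw [Nat.cast_succ, h2] at this
          exact h1 (by simpa using this)
    have := key (k - 1) (by omega)
    rw [Nat.cast_sub (by omega)] at this
    simpa using this.symm
  have hcard' := (hH.connected_delete_edge_of_not_isBridge hHb).card_vert_le_card_edgeSet_add_one
  rw [Nat.card_eq_fintype_card, hcard, SimpleGraph.deleteEdges_deleteEdges, Nat.card_coe_set_eq,
    SimpleGraph.edgeSet_deleteEdges, Set.ncard_sdiff] at hcard'
  · rw [Set.singleton_union, Set.ncard_pair (hc 0), ← SimpleGraph.coe_edgeFinset,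
      Set.ncard_coe_finset] at hcard'
    have : 2 ≤ G.edgeFinset.card := by
      rw [← Finset.card_pair (hc 0)]
      refine Finset.card_le_card ?_
      simp [Finset.insert_subset_iff, hxy]
      simpa using hcadj 0
    omega
  · rintro e (rfl | rfl)
    · exact hxy
    · exact hcadj 0

/-- A permutation moving an odd number of vertices along the edges of a graph whose edges off a
given cycle are bridges must rotate that cycle. -/
theorem rotates_of_odd_support [Fintype V] {G : SimpleGraph V} {k : ℕ} (hk3 : 3 ≤ k)
    {c : ZMod k → V} (hcinj : Function.Injective c)
    (hb : ∀ x y, G.Adj x y → (∀ i, s(x, y) ≠ s(c i, c (i + 1))) → G.IsBridge s(x, y))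
    {σ : Equiv.Perm V} (hσ : ∀ i, σ i ≠ i → G.Adj i (σ i)) (hodd : Odd σ.support.card) :
    (∀ j, σ (c j) = c (j + 1)) ∨ (∀ j, σ (c j) = c (j - 1)) := by
  have htwo : (1 + 1 : ZMod k) ≠ 0 := two_ne_zero_zmod hk3
  have : NeZero k := ⟨by omega⟩
  have hex : ∃ x, σ (σ x) ≠ x := by
    by_contra! h
    have := Equiv.Perm.two_dvd_card_support (σ := σ) (by ext x; simp [sq, h])
    rw [← Nat.not_even_iff_odd] at hodd
    exact hodd (even_iff_two_dvd.2 this)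
  have hcyc : ∀ x, σ (σ x) ≠ x → ∃ i, s(x, σ x) = s(c i, c (i + 1)) := by
    intro x hx
    by_contra! h
    refine hx (apply_apply_eq_of_isBridge hσ (hb _ _ (hσ x ?_) h))
    intro hfix
    rw [hfix, hfix] at hx
    exact hx rfl
  have hstep : ∀ ε : ZMod k, ε = 1 ∨ ε = -1 → ∀ i, σ (c i) = c (i + ε) →
      σ (c (i + ε)) ≠ c i → σ (c (i + ε)) = c (i + ε + ε) := by
    intro ε hε i h1 h2
    obtain ⟨l, hl⟩ := hcyc (c (i + ε)) (fun h => h2 (σ.injective (h.trans h1.symm)))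
    rcases Sym2.eq_iff.1 hl with ⟨ha, hb⟩ | ⟨ha, hb⟩ <;> have ha := hcinj ha
    · subst ha
      rcases hε with rfl | rfl
      · exact hb
      · exact absurd (by simpa using hb) h2
    · obtain rfl : l = i + ε - 1 := by rw [ha]; ring
      rcases hε with rfl | rfl
      · exact absurd (by simpa using hb) h2
      · rw [hb, sub_eq_add_neg]
  have hall : ∀ ε : ZMod k, ε = 1 ∨ ε = -1 → ∀ i, σ (c i) = c (i + ε) →
      σ (c (i + ε)) ≠ c i → ∀ j, σ (c j) = c (j + ε) := by
    intro ε hε i h1 h2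
    have hiter : ∀ n : ℕ, σ (c (i + n * ε)) = c (i + n * ε + ε) ∧
        σ (c (i + n * ε + ε)) ≠ c (i + n * ε) := by
      intro n
      induction n with
      | zero => simpa using ⟨h1, h2⟩
      | succ n ih =>
        have he : i + ((n + 1 : ℕ) : ZMod k) * ε = i + n * ε + ε := by push_cast; ring
        have hs := hstep ε hε _ ih.1 ih.2
        rw [he]
        refine ⟨hs, fun h => ?_⟩
        have := hcinj (σ.injective (h.trans ih.1.symm))
        rw [add_assoc, add_eq_left] at this
        rcases hε with rfl | rfl
        · exact htwo this
        · rw [← neg_add, neg_eq_zero] at this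
          exact htwo this
    intro j
    have hεε : ε * ε = 1 := by rcases hε with rfl | rfl <;> simp
    have hj : i + ((ε * (j - i)).val : ZMod k) * ε = j := by
      rw [ZMod.natCast_zmod_val]
      linear_combination (j - i) * hεε
    rw [← hj]
    exact (hiter _).1
  obtain ⟨x, hx⟩ := hex
  obtain ⟨i, hi⟩ := hcyc x hx
  rcases Sym2.eq_iff.1 hi with ⟨rfl, hb⟩ | ⟨rfl, hb⟩
  · exact Or.inl (hall 1 (Or.inl rfl) i hb (by rwa [hb] at hx))
  · right
    simpa only [sub_eq_add_neg] using hall (-1) (Or.inr rfl) (i + 1) (by simpa using hb)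
      (by rw [hb] at hx; simpa using hx)

/-- The rotation of the vertices of an odd cycle, as a permutation of all vertices. -/
theorem exists_rotation {k : ℕ} [Fintype V] (hkodd : Odd k) {c : ZMod k → V}
    (hcinj : Function.Injective c) :
    ∃ ρ : Equiv.Perm V, (∀ j, ρ (c j) = c (j + 1)) ∧ (∀ x ∉ Set.range c, ρ x = x) ∧
      Equiv.Perm.sign ρ = 1 := by
  have : NeZero k := ⟨hkodd.pos.ne'⟩
  let r : Equiv.Perm (ZMod k) := Equiv.addRight 1
  have hr : r ^ k = 1 := by
    ext j
    simp [r]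
  refine ⟨r.extendDomain (Equiv.ofInjective c hcinj), fun j => ?_, fun x hx => ?_, ?_⟩
  · exact r.extendDomain_apply_image (Equiv.ofInjective c hcinj) j
  · exact r.extendDomain_apply_not_subtype _ hx
  · rw [Equiv.Perm.sign_extendDomain]
    rcases Int.units_eq_one_or (Equiv.Perm.sign r) with h | h
    · exact h
    · have := congrArg Equiv.Perm.sign hr
      rw [map_pow, h, hkodd.neg_one_pow, map_one] at this
      exact absurd this (by decide)

/-- The involutions moving `m` vertices along edges and fixing a given set of vertices. -/
noncomputable def edgeInvolutions [Fintype V] (G : SimpleGraph V) (s : Set V) (m : ℕ) :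
    Finset (Equiv.Perm V) :=
  {τ | τ.support.card = m ∧ (∀ i, τ i ≠ i → G.Adj i (τ i)) ∧ (∀ i, τ (τ i) = i) ∧
    ∀ x ∈ s, τ x = x}

theorem mem_edgeInvolutions [Fintype V] {G : SimpleGraph V} {s : Set V} {m : ℕ}
    {τ : Equiv.Perm V} :
    τ ∈ edgeInvolutions G s m ↔ τ.support.card = m ∧ (∀ i, τ i ≠ i → G.Adj i (τ i)) ∧
      (∀ i, τ (τ i) = i) ∧ ∀ x ∈ s, τ x = x :=
  Finset.mem_filter_univ τ

/-- Removing the rotation of the cycle from the permutations that rotate it. -/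
theorem sum_rotating_perm [Fintype V] {G : SimpleGraph V} {k : ℕ} [NeZero k] (hk3 : 3 ≤ k)
    (hkodd : Odd k) {c : ZMod k → V} (hcinj : Function.Injective c)
    (hcadj : ∀ i, G.Adj (c i) (c (i + 1)))
    (hinv : ∀ σ : Equiv.Perm V, (∀ i, σ i ≠ i → G.Adj i (σ i)) →
      ∀ x ∉ Set.range c, σ (σ x) = x) (w : V → ℝ) (m : ℕ) :
    ∑ σ : Equiv.Perm V with (σ.support.card = k + m ∧ ∀ i, σ i ≠ i → G.Adj i (σ i)) ∧
        ∀ j, σ (c j) = c (j + 1), ((Equiv.Perm.sign σ : ℤ) : ℝ) * ∏ i ∈ σ.support, w i =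
      (∏ j, w (c j)) * ∑ τ ∈ edgeInvolutions G (Set.range c) m,
        ((Equiv.Perm.sign τ : ℤ) : ℝ) * ∏ i ∈ τ.support, w i := by
  obtain ⟨ρ, hρc, hρ, hρs⟩ := exists_rotation hkodd hcinj
  have hone : (1 : ZMod k) ≠ 0 := by
    have := zmod_natCast_ne (k := k) (a := 1) (b := 0) (by omega) (by omega) (by omega)
    exact_mod_cast this
  have hsupp : ρ.support = Finset.univ.image c := by
    ext x
    rw [Equiv.Perm.mem_support, Finset.mem_image]
    constructor
    · intro h
      by_contra hx
      exact h (hρ x fun ⟨j, hj⟩ => hx ⟨j, Finset.mem_univ j, hj⟩)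
    · rintro ⟨j, -, rfl⟩ h
      rw [hρc] at h
      exact hone (by simpa using hcinj h)
  have hcard : ρ.support.card = k := by
    rw [hsupp, Finset.card_image_of_injective _ hcinj, Finset.card_univ, ZMod.card]
  have hdisj : ∀ τ : Equiv.Perm V, (∀ x ∈ Set.range c, τ x = x) → ρ.Disjoint τ := by
    intro τ hτ x
    by_cases hx : x ∈ Set.range c
    · exact Or.inr (hτ x hx)
    · exact Or.inl (hρ x hx)
  rw [Finset.mul_sum]
  symm
  refine Finset.sum_bij' (fun τ _ => ρ * τ) (fun σ _ => ρ⁻¹ * σ) ?_ ?_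
    (fun τ _ => inv_mul_cancel_left ρ τ) (fun σ _ => mul_inv_cancel_left ρ σ) ?_
  · intro τ hτ
    obtain ⟨hm, hadj, hτ2, hfix⟩ := mem_edgeInvolutions.1 hτ
    rw [Finset.mem_filter_univ]
    refine ⟨⟨?_, fun i hi => ?_⟩, fun j => ?_⟩
    · rw [(hdisj τ hfix).card_support_mul, hcard, hm]
    · by_cases hx : i ∈ Set.range c
      · rw [Equiv.Perm.mul_apply, hfix i hx]
        obtain ⟨j, rfl⟩ := hx
        rw [hρc]
        exact hcadj j
      · have hx' : τ i ∉ Set.range c := fun h => by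
          have h' := hfix _ h
          rw [hτ2] at h'
          exact hx (h' ▸ h)
        rw [Equiv.Perm.mul_apply, hρ _ hx'] at hi ⊢
        exact hadj i hi
    · rw [Equiv.Perm.mul_apply, hfix _ ⟨j, rfl⟩, hρc]
  · intro σ hσ
    obtain ⟨⟨hm, hadj⟩, hrot⟩ := (Finset.mem_filter_univ σ).1 hσ
    have hfix : ∀ x ∈ Set.range c, (ρ⁻¹ * σ) x = x := by
      rintro _ ⟨j, rfl⟩
      rw [Equiv.Perm.mul_apply, hrot, Equiv.Perm.inv_eq_iff_eq, hρc]
    have hoff : ∀ x ∉ Set.range c, σ x ∉ Set.range c ∧ (ρ⁻¹ * σ) x = σ x := by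
      intro x hx
      have hx' : σ x ∉ Set.range c := by
        rintro ⟨j, hj⟩
        refine hx ⟨j - 1, ?_⟩
        apply σ.injective
        rw [hrot, sub_add_cancel, hj]
      refine ⟨hx', ?_⟩
      rw [Equiv.Perm.mul_apply, Equiv.Perm.inv_eq_iff_eq, hρ _ hx']
    refine mem_edgeInvolutions.2 ⟨?_, fun i hi => ?_, fun i => ?_, hfix⟩
    · have := (hdisj _ hfix).card_support_mul
      rw [mul_inv_cancel_left, hm, hcard] at this
      omega
    · have hx : i ∉ Set.range c := fun h => hi (hfix i h)
      rw [(hoff i hx).2] at hi ⊢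
      exact hadj i hi
    · by_cases hx : i ∈ Set.range c
      · rw [hfix i hx, hfix i hx]
      · rw [(hoff i hx).2, (hoff _ (hoff i hx).1).2, hinv σ hadj i hx]
  · intro τ hτ
    obtain ⟨hm, hadj, hτ2, hfix⟩ := mem_edgeInvolutions.1 hτ
    have hd := hdisj τ hfix
    rw [hd.support_mul, Finset.prod_union hd.disjoint_support, hsupp,
      Finset.prod_image hcinj.injOn, Equiv.Perm.sign_mul, hρs, one_mul]
    ring

/-- The sign of an involution moving `2 * t` points. -/
theorem sign_of_involutive {ι : Type*} [Fintype ι] {τ : Equiv.Perm ι} (hτ : ∀ i, τ (τ i) = i)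
    {t : ℕ} (ht : τ.support.card = 2 * t) : Equiv.Perm.sign τ = (-1) ^ t := by
  rw [Equiv.Perm.sign_of_pow_two_eq_one (by ext i; simp [sq, hτ]),
    Equiv.Perm.card_fixedPoints, Nat.sub_sub_self (Equiv.Perm.sum_cycleType_le _),
    Equiv.Perm.sum_cycleType, ht, Nat.mul_div_cancel_left _ two_pos]

/-- The edges along which a permutation moves the vertices. -/
noncomputable def movedEdges [Fintype V] (τ : Equiv.Perm V) : Finset (Sym2 V) :=
  τ.support.image fun i => s(i, τ i)

/-- A pair is a moved edge exactly when its vertices are exchanged. -/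
theorem mk_mem_movedEdges [Fintype V] {τ : Equiv.Perm V} (hτ : ∀ i, τ (τ i) = i) {x y : V} :
    s(x, y) ∈ movedEdges τ ↔ τ x ≠ x ∧ y = τ x := by
  simp only [movedEdges, Finset.mem_image, Equiv.Perm.mem_support]
  constructor
  · rintro ⟨i, hi, he⟩
    rcases Sym2.eq_iff.1 he with ⟨rfl, rfl⟩ | ⟨rfl, rfl⟩
    · exact ⟨hi, rfl⟩
    · rw [hτ]
      exact ⟨hi.symm, rfl⟩
  · rintro ⟨hx, rfl⟩
    exact ⟨x, hx, rfl⟩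

theorem filter_support_eq_pair [Fintype V] {τ : Equiv.Perm V} (hτ : ∀ i, τ (τ i) = i) {x : V}
    (hx : τ x ≠ x) : {i ∈ τ.support | s(i, τ i) = s(x, τ x)} = ({x, τ x} : Finset V) := by
  ext i
  simp only [Finset.mem_filter, Equiv.Perm.mem_support, Finset.mem_insert, Finset.mem_singleton]
  constructor
  · rintro ⟨-, he⟩
    rcases Sym2.eq_iff.1 he with ⟨h, -⟩ | ⟨h, -⟩
    · exact Or.inl h
    · exact Or.inr h
  · rintro (rfl | rfl)
    · exact ⟨hx, rfl⟩
    · rw [hτ]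
      exact ⟨hx.symm, Sym2.eq_swap⟩

theorem two_mul_card_movedEdges [Fintype V] {τ : Equiv.Perm V} (hτ : ∀ i, τ (τ i) = i) :
    τ.support.card = 2 * (movedEdges τ).card := by
  rw [Finset.card_eq_sum_card_fiberwise (f := fun i => s(i, τ i)) (t := movedEdges τ)
    (fun i hi => Finset.mem_image_of_mem _ hi), mul_comm, ← smul_eq_mul]
  refine Finset.sum_const_nat fun e he => ?_
  obtain ⟨x, hx, rfl⟩ := Finset.mem_image.1 he
  have hx := Equiv.Perm.mem_support.1 hx
  rw [filter_support_eq_pair hτ hx, Finset.card_pair hx.symm]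

theorem prod_edgeM_movedEdges [Fintype V] (G : SimpleGraph V) {τ : Equiv.Perm V}
    (hτ : ∀ i, τ (τ i) = i) :
    ∏ e ∈ movedEdges τ, edgeM G e = ∏ i ∈ τ.support, (G.degree i : ℝ)⁻¹ := by
  rw [← Finset.prod_fiberwise_of_maps_to (g := fun i => s(i, τ i)) (t := movedEdges τ)
    (fun i hi => Finset.mem_image_of_mem _ hi)]
  refine Finset.prod_congr rfl fun e he => ?_
  obtain ⟨x, hx, rfl⟩ := Finset.mem_image.1 he
  have hx := Equiv.Perm.mem_support.1 hx
  rw [filter_support_eq_pair hτ hx, Finset.prod_pair hx.symm]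
  simp [edgeM, mul_comm]

/-- Every matching consists of the edges along which some involution moves the vertices. -/
theorem exists_movedEdges_eq [Fintype V] {S : Finset (Sym2 V)}
    (hloop : ∀ x, s(x, x) ∉ S)
    (hS : ∀ e ∈ S, ∀ f ∈ S, e ≠ f → ∀ x : V, ¬(x ∈ e ∧ x ∈ f)) :
    ∃ τ : Equiv.Perm V, (∀ i, τ (τ i) = i) ∧ movedEdges τ = S := by
  have hex : ∀ x, ∃ y, s(x, y) ∈ S ∨ (y = x ∧ ∀ z, s(x, z) ∉ S) := by
    intro x
    by_cases h : ∃ y, s(x, y) ∈ S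
    · exact h.imp fun y hy => Or.inl hy
    · exact ⟨x, Or.inr ⟨rfl, fun z hz => h ⟨z, hz⟩⟩⟩
  choose g hg using hex
  have huniq : ∀ x y, s(x, y) ∈ S → g x = y := by
    intro x y hy
    rcases hg x with h | h
    · by_contra hne
      exact hS _ h _ hy (fun he => hne (Sym2.congr_right.1 he)) x
        ⟨Sym2.mem_mk_left _ _, Sym2.mem_mk_left _ _⟩
    · exact absurd hy (h.2 y)
  have hinv : Function.Involutive g := by
    intro x
    rcases hg x with h | h
    · exact huniq _ _ (Sym2.eq_swap ▸ h)
    · rw [h.1, h.1]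
  refine ⟨hinv.toPerm, hinv, ?_⟩
  ext e
  induction e using Sym2.ind with
  | _ x y =>
  rw [mk_mem_movedEdges (τ := hinv.toPerm) hinv]
  simp only [Function.Involutive.coe_toPerm]
  constructor
  · rintro ⟨hx, rfl⟩
    exact (hg x).resolve_right fun h => hx h.1
  · intro h
    have hy := huniq x y h
    refine ⟨fun hx => hloop x ?_, hy.symm⟩
    rwa [← hy, hx] at h

/-- The signed sum over the edge involutions avoiding `s` is a matching sum over the edges
avoiding `s`. -/
theorem sum_edgeInvolutions [Fintype V] (G : SimpleGraph V) (s : Set V) (A : Finset (Sym2 V))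
    (hA : ∀ x y, s(x, y) ∈ A ↔ G.Adj x y ∧ x ∉ s ∧ y ∉ s) (t : ℕ) :
    ∑ τ ∈ edgeInvolutions G s (2 * t), ((Equiv.Perm.sign τ : ℤ) : ℝ) *
        ∏ i ∈ τ.support, (G.degree i : ℝ)⁻¹ = (-1) ^ t * matchSum G A t := by
  rw [matchSum, Finset.mul_sum]
  refine Finset.sum_bij (fun τ _ => movedEdges τ) ?_ ?_ ?_ ?_
  · intro τ hτ
    obtain ⟨hm, hadj, hinv, hfix⟩ := mem_edgeInvolutions.1 hτ
    refine Finset.mem_filter.2 ⟨Finset.mem_powerset.2 fun e he => ?_, ?_, ?_⟩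
    · obtain ⟨x, hx, rfl⟩ := Finset.mem_image.1 he
      have hx := Equiv.Perm.mem_support.1 hx
      refine (hA _ _).2 ⟨hadj x hx, fun h => hx (hfix x h), fun h => hx ?_⟩
      exact (hfix _ h).symm.trans (hinv x)
    · have := two_mul_card_movedEdges hinv
      omega
    · rintro e he f hf hne x ⟨hxe, hxf⟩
      obtain ⟨y, rfl⟩ := Sym2.mem_iff_exists.1 hxe
      obtain ⟨z, rfl⟩ := Sym2.mem_iff_exists.1 hxf
      rw [mk_mem_movedEdges hinv] at he hf
      exact hne (by rw [he.2, hf.2])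
  · intro τ hτ τ' hτ' he
    obtain ⟨-, -, hinv, -⟩ := mem_edgeInvolutions.1 hτ
    obtain ⟨-, -, hinv', -⟩ := mem_edgeInvolutions.1 hτ'
    have hiff : ∀ x y, (τ x ≠ x ∧ y = τ x) ↔ (τ' x ≠ x ∧ y = τ' x) := fun x y => by
      rw [← mk_mem_movedEdges hinv, ← mk_mem_movedEdges hinv']
      exact Finset.ext_iff.1 he _
    ext x
    by_cases hx : τ x = x
    · by_cases hx' : τ' x = x
      · rw [hx, hx']
      · exact absurd hx ((hiff x _).2 ⟨hx', rfl⟩).1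
    · exact ((hiff x _).1 ⟨hx, rfl⟩).2
  · intro S hS
    obtain ⟨hSA, hcard, hmatch⟩ := Finset.mem_filter.1 hS
    have hSA := Finset.mem_powerset.1 hSA
    obtain ⟨τ, hinv, rfl⟩ := exists_movedEdges_eq
      (fun x hx => G.irrefl ((hA _ _).1 (hSA hx)).1) hmatch
    have hmem : ∀ x, τ x ≠ x → G.Adj x (τ x) ∧ x ∉ s ∧ τ x ∉ s := fun x hx =>
      (hA _ _).1 (hSA ((mk_mem_movedEdges hinv).2 ⟨hx, rfl⟩))
    refine ⟨τ, mem_edgeInvolutions.2 ⟨?_, fun x hx => (hmem x hx).1, hinv, fun x hx => ?_⟩, rfl⟩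
    · rw [two_mul_card_movedEdges hinv, hcard]
    · by_contra h
      exact (hmem x h).2.1 hx
  · intro τ hτ
    obtain ⟨hm, -, hinv, -⟩ := mem_edgeInvolutions.1 hτ
    rw [prod_edgeM_movedEdges G hinv, sign_of_involutive hinv hm]
    simp

/-- The tree edges are the edges avoiding the cycle. -/
theorem mk_mem_treeEdges [Fintype V] {G : SimpleGraph V} {k : ℕ} [NeZero k] (hk3 : 3 ≤ k)
    {c : ZMod k → V} (hcinj : Function.Injective c) (hcadj : ∀ i, G.Adj (c i) (c (i + 1)))
    (hdegc : ∀ i, i ≠ 0 → G.degree (c i) = 2) (x y : V) :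
    s(x, y) ∈ treeEdges G c ↔ G.Adj x y ∧ x ∉ Set.range c ∧ y ∉ Set.range c := by
  have htwo : (1 + 1 : ZMod k) ≠ 0 := two_ne_zero_zmod hk3
  simp only [treeEdges, Finset.mem_filter, SimpleGraph.mem_edgeFinset, SimpleGraph.mem_edgeSet]
  constructor
  · rintro ⟨hxy, hcyc, h0⟩
    have key : ∀ a b, s(a, b) = s(x, y) → a ∉ Set.range c := by
      rintro _ b he ⟨i, rfl⟩
      have hi : i ≠ 0 := by
        rintro rfl
        exact h0 (he ▸ Sym2.mem_mk_left _ _)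
      have hnb : ({c (i + 1), c (i - 1)} : Finset V) = G.neighborFinset (c i) := by
        refine Finset.eq_of_subset_of_card_le ?_ ?_
        · intro z hz
          rw [SimpleGraph.mem_neighborFinset]
          rcases Finset.mem_insert.1 hz with rfl | hz
          · exact hcadj i
          · rw [Finset.mem_singleton.1 hz]
            simpa using (hcadj (i - 1)).symm
        · rw [SimpleGraph.card_neighborFinset_eq_degree, hdegc i hi, Finset.card_pair]
          intro h
          have := hcinj h
          exact htwo (by linear_combination this)
      have hb : b ∈ G.neighborFinset (c i) := by
        rw [SimpleGraph.mem_neighborFinset, ← SimpleGraph.mem_edgeSet, he]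
        exact hxy
      rw [← hnb] at hb
      rcases Finset.mem_insert.1 hb with rfl | hb
      · exact hcyc i he.symm
      · rw [Finset.mem_singleton.1 hb] at he
        refine hcyc (i - 1) ?_
        rw [sub_add_cancel, ← he, Sym2.eq_swap]
    exact ⟨hxy, key x y rfl, key y x Sym2.eq_swap⟩
  · rintro ⟨hxy, hx, hy⟩
    refine ⟨hxy, fun i he => ?_, fun h => ?_⟩
    · have : c i ∈ s(x, y) := he ▸ Sym2.mem_mk_left _ _
      rcases Sym2.mem_iff.1 this with h | h
      · exact hx ⟨i, h⟩
      · exact hy ⟨i, h⟩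
    · rcases Sym2.mem_iff.1 h with h | h
      · exact hx ⟨0, h⟩
      · exact hy ⟨0, h⟩

/-- In the cycle-plus-tree setting, for `t ≥ 1` with `k + 2t ≤ n`:
if `2^(k+2t)·ρ_(n-k-2t)` is an integer, then `2^(2t)·K_(2t)` is an integer. -/
theorem int_matchSum_of_int_coeff {V : Type*} [Fintype V] [DecidableEq V] (G : SimpleGraph V)
    (hconn : G.Connected) (k : ℕ) [NeZero k] (hk3 : 3 ≤ k) (hkodd : Odd k)
    (c : ZMod k → V) (hcinj : Function.Injective c)
    (hcadj : ∀ i : ZMod k, G.Adj (c i) (c (i + 1)))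
    (hcard : Fintype.card V = G.edgeFinset.card)
    (hdegu : G.degree (c 0) = 4) (hdegc : ∀ i : ZMod k, i ≠ 0 → G.degree (c i) = 2)
    (t : ℕ) (ht : 1 ≤ t) (htn : k + 2 * t ≤ Fintype.card V)
    (hint : ∃ m : ℤ, (2 : ℝ) ^ (k + 2 * t) *
      (transition G).charpoly.coeff (Fintype.card V - k - 2 * t) = (m : ℝ)) :
    ∃ m : ℤ, (2 : ℝ) ^ (2 * t) * Km G c t = (m : ℝ) := by
  obtain rfl : ‹DecidableEq V› = fun a b => Classical.propDecidable (a = b) :=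
    Subsingleton.elim _ _
  obtain ⟨m, hm⟩ := hint
  have hcard' : Fintype.card V = G.edgeFinset.card := by convert hcard
  have hbridge : ∀ x y, G.Adj x y → (∀ i, s(x, y) ≠ s(c i, c (i + 1))) →
      G.IsBridge s(x, y) := fun x y =>
    isBridge_of_unicyclic hconn hk3 hcinj hcadj hcard'
  have hinv : ∀ σ : Equiv.Perm V, (∀ i, σ i ≠ i → G.Adj i (σ i)) →
      ∀ x ∉ Set.range c, σ (σ x) = x := by
    intro σ hσ x hx
    by_cases hfix : σ x = x
    · rw [hfix, hfix]
    refine apply_apply_eq_of_isBridge hσ (hbridge _ _ (hσ x hfix) fun i he => hx ?_)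
    rcases Sym2.eq_iff.1 he with ⟨h, -⟩ | ⟨h, -⟩
    · exact ⟨_, h.symm⟩
    · exact ⟨_, h.symm⟩
  have hsum := sum_edgeInvolutions G (Set.range c) (treeEdges G c)
    (mk_mem_treeEdges hk3 hcinj hcadj hdegc) t
  have hweight : ∏ j, (G.degree (c j) : ℝ)⁻¹ = 4⁻¹ * 2⁻¹ ^ (k - 1) := by
    rw [← Finset.mul_prod_erase _ _ (Finset.mem_univ 0), hdegu,
      Finset.prod_congr rfl (g := fun _ => (2 : ℝ)⁻¹), Finset.prod_const,
      Finset.card_erase_of_mem (Finset.mem_univ 0), Finset.card_univ, ZMod.card]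
    · simp
    · intro j hj
      rw [hdegc j (Finset.ne_of_mem_erase hj)]
      simp
  have hpos := sum_rotating_perm hk3 hkodd hcinj hcadj hinv (fun i => (G.degree i : ℝ)⁻¹) (2 * t)
  have hrange : Set.range (fun j => c (-j)) = Set.range c :=
    (Equiv.neg (ZMod k)).surjective.range_comp c
  have hneg := sum_rotating_perm (G := G) (c := fun j => c (-j)) hk3 hkodd
    (hcinj.comp neg_injective) (fun i => by simpa [sub_eq_add_neg, add_comm] using (hcadj (-i - 1)).symm)
    (by rwa [hrange]) (fun i => (G.degree i : ℝ)⁻¹) (2 * t)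
  have hflip : ∏ j, (G.degree (c (-j)) : ℝ)⁻¹ = ∏ j, (G.degree (c j) : ℝ)⁻¹ :=
    Equiv.prod_comp (Equiv.neg (ZMod k)) fun j => (G.degree (c j) : ℝ)⁻¹
  rw [hrange, hsum, hflip, hweight] at hneg
  rw [hsum, hweight] at hpos
  have hcoeff : (transition G).charpoly.coeff (Fintype.card V - k - 2 * t) =
      (-1) ^ (t + 1) * 2⁻¹ ^ k * Km G c t := by
    rw [Nat.sub_sub, charpoly_transition_coeff G htn]
    rw [← Finset.sum_filter_add_sum_filter_not _
      (fun σ : Equiv.Perm V => ∀ j, σ (c j) = c (j + 1)), Finset.filter_filter,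
      Finset.filter_filter, hpos]
    have hnot : ∀ σ : Equiv.Perm V,
        ((σ.support.card = k + 2 * t ∧ ∀ i, σ i ≠ i → G.Adj i (σ i)) ∧
          ¬ ∀ j, σ (c j) = c (j + 1)) ↔
        ((σ.support.card = k + 2 * t ∧ ∀ i, σ i ≠ i → G.Adj i (σ i)) ∧
          ∀ j, σ (c (-j)) = c (-(j + 1))) := by
      refine fun σ => and_congr_right fun ⟨hσc, hσ⟩ => ⟨fun h j => ?_, fun h h' => ?_⟩
      · have hodd : Odd σ.support.card := hσc ▸ hkodd.add_even (even_two_mul t)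
        rw [((rotates_of_odd_support hk3 hcinj hbridge hσ hodd).resolve_left h) (-j)]
        congr 1
        ring
      · have := hcinj ((h' (-0)).symm.trans (h 0))
        exact two_ne_zero_zmod hk3 (by linear_combination this)
    simp only [hnot]
    rw [hneg, Km]
    obtain ⟨l, rfl⟩ : ∃ l, k = l + 1 := ⟨k - 1, by omega⟩
    rw [pow_add _ (l + 1) (2 * t), hkodd.neg_one_pow, pow_mul, neg_one_sq, one_pow,
      Nat.add_sub_cancel]
    ring
  refine ⟨(-1) ^ (t + 1) * m, ?_⟩
  have hsq : ((-1 : ℝ) ^ (t + 1)) * (-1) ^ (t + 1) = 1 := by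
    rw [← mul_pow]
    simp
  have htwo : (2 : ℝ) ^ k * 2⁻¹ ^ k = 1 := by
    rw [← mul_pow]
    simp
  push_cast
  rw [← hm, hcoeff, pow_add]
  linear_combination (-(2 : ℝ) ^ (2 * t) * Km G c t) * hsq
    - (2 : ℝ) ^ (2 * t) * Km G c t * ((-1 : ℝ) ^ (t + 1)) * (-1) ^ (t + 1) * htwo

end GroverPaper
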